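/- arXiv:2506.16937 — 2 statements merged into one kernel-verified Lean document; each statement's English description precedes it below -/
import Mathlib

section
/- With notation as above (Q_{φ^{(ℓ)}} the minimal polynomial of π_ℓ = τ^{mℓ} over 𝔽_q(T), d_ℓ = deg Q_{φ^{(ℓ)}}), the equality ε_ℓ(Q_{φ^{(1)}}) = (Q_{φ^{(ℓ)}})^{d₁/d_ℓ} holds; in particular d_ℓ divides d₁. -/
open Polynomial

/-- The twist `τ : x ↦ x^q` (`q = p^ν`), an additive endomorphism of the algebraic
closure of `k`. -/
noncomputable def twistTau (k : Type*) [Field k] (p ν : ℕ) [Fact p.Prime] [CharP k p] :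
    AddMonoid.End (AlgebraicClosure k) :=
  (iterateFrobenius (AlgebraicClosure k) p ν).toAddMonoidHom

/-- Multiplication by (the image of) `c ∈ k`, as an additive endomorphism of the algebraic
closure of `k`. -/
noncomputable def scalarEnd (k : Type*) [Field k] (c : k) : AddMonoid.End (AlgebraicClosure k) :=
  AddMonoidHom.mulLeft (algebraMap k (AlgebraicClosure k) c)

/-- The coefficient map `𝔽_q[T] → 𝔽_q(T) → Ω` into an algebraic closure `Ω` of `𝔽_q(T)`. -/
noncomputable def coeffToClosure (F : Type*) [Field F] [Fintype F] :
    Polynomial F →+* AlgebraicClosure (RatFunc F) :=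
  (algebraMap (RatFunc F) (AlgebraicClosure (RatFunc F))).comp
    (algebraMap (Polynomial F) (RatFunc F))

/-!
The Frobenius `π` commutes with `A = 𝔽_q[T]`, and both act on `AlgebraicClosure k` through
additive polynomials, which form a domain under composition; hence `A[π]` is a commutative domain.
Let `h : A[X]`, for instance `X ^ ℓ`, and let `N` be the monic polynomial with roots `h(αᵢ)`, where
the `αᵢ` are the roots of the minimal polynomial of `π`. Being a resultant, `N` has coefficients in
`A`. Each `h(αᵢ)` is a root of the minimal polynomial `P` of `h(π)`, so `N` divides a power of `P`.
As `A` is integrally closed, `P` is prime, hence `N` is itself a power of `P`, and comparing degrees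
gives the exponent. Galois theory is not involved, so inseparability is harmless.
-/

theorem exists_map_eq_prod_X_sub_C_eval₂ {R S ι : Type*} [CommRing R] [CommRing S] [Fintype ι]
    (f : R →+* S) {Q : R[X]} {α : ι → S} (hα : Q.map f = ∏ i, (X - C (α i))) (h : R[X]) :
    ∃ N : R[X], N.map f = ∏ i, (X - C (h.eval₂ f (α i))) := by
  nontriviality S
  -- `N(X)` is the resultant of `Q(Y)` and `X - h(Y)` with respect to `Y`.
  let G : R[X][X] := C X - h.map C
  have hC : (mapRingHom f).comp C = (C : S →+* S[X]).comp f := by ext; simp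
  have hQ : (Q.map C).map (mapRingHom f) = ∏ i, (X - C (C (α i))) := by
    rw [Polynomial.map_map, hC, ← Polynomial.map_map, hα]
    simp [Polynomial.map_prod]
  have hG : (G.map (mapRingHom f)).natDegree ≤ h.natDegree :=
    natDegree_map_le.trans <| (natDegree_sub_le _ _).trans (by simp [natDegree_map_le])
  have hGα (a : S) : (G.map (mapRingHom f)).eval (C a) = X - C (h.eval₂ f a) := by
    simp [G, eval_map, Polynomial.map_map, hC, hom_eval₂]
  refine ⟨(Q.map C).resultant G (∏ i, (X - C (C (α i))) : S[X][X]).natDegree h.natDegree, ?_⟩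
  rw [← coe_mapRingHom, ← resultant_map_map, hQ, resultant_prod_left _ _ _ _ (by simp) hG]
  simp [resultant_X_sub_C_left _ _ _ hG, hGα]

/-- `Q` is a minimal polynomial of `x`: a monic polynomial of least degree over the ring `A`,
acting through `φ`, that annihilates `x`. The ring `R` need not be commutative, so that `x` may be
the Frobenius of a Drinfeld module inside a ring of endomorphisms. -/
structure IsMinimalPolynomial {A R : Type*} [CommRing A] [Ring R] (φ : A →+* R) (x : R)
    (Q : A[X]) : Prop where
  monic : Q.Monic
  eval₂_eq_zero : Q.eval₂ φ x = 0
  natDegree_le : ∀ g : A[X], g.Monic → g.eval₂ φ x = 0 → Q.natDegree ≤ g.natDegree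

namespace IsMinimalPolynomial

variable {A R S : Type*} [CommRing A] [Ring R] [Ring S] {Q : A[X]}

theorem of_comp_injective {φ : A →+* R} {x : R} {ψ : R →+* S} (hψ : Function.Injective ψ)
    (hQ : IsMinimalPolynomial (ψ.comp φ) (ψ x) Q) : IsMinimalPolynomial φ x Q where
  monic := hQ.monic
  eval₂_eq_zero := hψ <| by rw [hom_eval₂, hQ.eval₂_eq_zero, map_zero]
  natDegree_le g hg hgx := hQ.natDegree_le g hg <| by rw [← hom_eval₂, hgx, map_zero]

theorem natDegree_pos [Nontrivial R] {φ : A →+* R} {x : R} (hQ : IsMinimalPolynomial φ x Q) :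
    0 < Q.natDegree := by
  refine hQ.monic.natDegree_pos_of_not_isUnit fun hunit ↦ one_ne_zero (α := R) ?_
  simpa [hQ.monic.isUnit_iff.mp hunit] using hQ.eval₂_eq_zero

theorem isIntegral [Algebra A R] {s : R} (hQ : IsMinimalPolynomial (algebraMap A R) s Q) :
    IsIntegral A s :=
  ⟨Q, hQ.monic, hQ.eval₂_eq_zero⟩

theorem eq_minpoly {B : Type*} [CommRing B] [IsDomain A] [IsIntegrallyClosed A] [IsDomain B]
    [Algebra A B] [Module.IsTorsionFree A B] {s : B}
    (hQ : IsMinimalPolynomial (algebraMap A B) s Q) : Q = minpoly A s :=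
  minpoly.IsIntegrallyClosed.unique_of_degree_le_degree_minpoly hQ.monic hQ.eval₂_eq_zero <| by
    have hs := minpoly.monic hQ.isIntegral
    rw [degree_eq_natDegree hQ.monic.ne_zero, degree_eq_natDegree hs.ne_zero, Nat.cast_le]
    exact hQ.natDegree_le _ hs (minpoly.aeval A s)

end IsMinimalPolynomial

section IntegrallyClosed

variable {A B Ω ι : Type*} [CommRing A] [IsDomain A] [IsIntegrallyClosed A] [CommRing Ω]
  [Fintype ι]

theorem X_sub_C_eval₂_dvd_map_minpoly [CommRing B] [IsDomain B] [Algebra A B]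
    [Module.IsTorsionFree A B] {s : B} (hs : IsIntegral A s) (h : A[X]) {f : A →+* Ω} {a : Ω}
    (ha : (minpoly A s).eval₂ f a = 0) :
    X - C (h.eval₂ f a) ∣ (minpoly A (aeval s h)).map f := by
  have hdvd : minpoly A s ∣ (minpoly A (aeval s h)).comp h :=
    minpoly.isIntegrallyClosed_dvd hs (by rw [aeval_comp, minpoly.aeval])
  rw [dvd_iff_isRoot, IsRoot, eval_map, ← eval₂_comp]
  exact eval₂_eq_zero_of_dvd_of_eval₂_eq_zero f a hdvd ha

variable {f : A →+* Ω} {α : ι → Ω}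

theorem exists_prod_X_sub_C_eval₂_eq_map_minpoly_pow [CommRing B] [IsDomain B]
    [Algebra A B] [Module.IsTorsionFree A B] {s : B} (hs : IsIntegral A s) (h : A[X])
    (hf : Function.Injective f) (hα : (minpoly A s).map f = ∏ i, (X - C (α i))) :
    ∃ e, ∏ i, (X - C (h.eval₂ f (α i))) = ((minpoly A (aeval s h)).map f) ^ e := by
  have hs' : IsIntegral A (aeval s h) :=
    Algebra.adjoin_le (S := integralClosure A B) (by simpa) (aeval_mem_adjoin_singleton A s)
  -- The left-hand side descends to `A`, where it divides a power of a prime element.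
  obtain ⟨N, hN⟩ := exists_map_eq_prod_X_sub_C_eval₂ f hα h
  have hNmonic : N.Monic :=
    monic_of_injective hf (hN ▸ monic_prod_of_monic _ _ fun _ _ ↦ monic_X_sub_C _)
  have hroot (i : ι) : X - C (h.eval₂ f (α i)) ∣ (minpoly A (aeval s h)).map f :=
    X_sub_C_eval₂_dvd_map_minpoly hs h <| by
      rw [← eval_map, hα, eval_prod, Finset.prod_eq_zero (Finset.mem_univ i) (by simp)]
  have hdvd : N ∣ minpoly A (aeval s h) ^ Fintype.card ι := by
    rw [← Polynomial.map_dvd_map f hf hNmonic, hN, Polynomial.map_pow]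
    simpa using Finset.prod_dvd_prod_of_dvd (s := Finset.univ) _ _ fun i _ ↦ hroot i
  obtain ⟨e, -, he⟩ := (dvd_prime_pow (minpoly.prime_of_isIntegrallyClosed hs') _).mp hdvd
  refine ⟨e, ?_⟩
  rw [← hN, eq_of_monic_of_associated hNmonic ((minpoly.monic hs').pow e) he, Polynomial.map_pow]

theorem IsMinimalPolynomial.exists_prod_X_sub_C_eval₂_eq_map_pow {R : Type*} [Ring R] [IsDomain R]
    {φ : A →+* R} (hφ : Function.Injective φ) {x : R} (hx : ∀ a, Commute (φ a) x)
    {h Q Q' : A[X]} (hQ : IsMinimalPolynomial φ x Q)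
    (hQ' : IsMinimalPolynomial φ (h.eval₂ φ x) Q') (hf : Function.Injective f)
    (hα : Q.map f = ∏ i, (X - C (α i))) :
    ∃ e, ∏ i, (X - C (h.eval₂ f (α i))) = (Q'.map f) ^ e := by
  -- `x` lies in the commutative domain `A[x] ≃ A[X] ⧸ ker ev`, where `minpoly` is available.
  let ev : A[X] →+* R := eval₂RingHom' φ x hx
  let B := A[X] ⧸ RingHom.ker ev
  let ψ : B →+* R := RingHom.kerLift ev
  let s : B := Ideal.Quotient.mk _ X
  have hψ : Function.Injective ψ := RingHom.kerLift_injective ev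
  have hψφ : ψ.comp (algebraMap A B) = φ := by
    ext a
    exact (RingHom.kerLift_mk ev (C a)).trans (eval₂_C φ x)
  have hψs : ψ s = x := (RingHom.kerLift_mk ev X).trans (eval₂_X φ x)
  have hψh : ψ (aeval s h) = h.eval₂ φ x := by rw [aeval_def, hom_eval₂, hψφ, hψs]
  have : IsDomain B := hψ.isDomain ψ
  have : FaithfulSMul A B := (faithfulSMul_iff_algebraMap_injective A B).mpr <|
    .of_comp (f := ψ) (by rwa [← RingHom.coe_comp, hψφ])
  have hQs : IsMinimalPolynomial (algebraMap A B) s Q := .of_comp_injective hψ (by rwa [hψφ, hψs])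
  have hQs' : IsMinimalPolynomial (algebraMap A B) (aeval s h) Q' :=
    .of_comp_injective hψ (by rwa [hψφ, hψh])
  rw [hQs'.eq_minpoly]
  exact exists_prod_X_sub_C_eval₂_eq_map_minpoly_pow hQs.isIntegral h hf (hQs.eq_minpoly ▸ hα)

end IntegrallyClosed

/-- The ring of additive endomorphisms of `L` given by a polynomial, that is, of additive
polynomials under composition; it contains the scalars and the Frobenius maps. -/
def polynomialEnd (L : Type*) [CommRing L] : Subring (AddMonoid.End L) where
  carrier := {f | ∃ P : L[X], ∀ x, f x = P.eval x}
  mul_mem' := by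
    rintro f g ⟨P, hP⟩ ⟨Q, hQ⟩
    exact ⟨P.comp Q, fun x ↦ by simp [hP, hQ]⟩
  one_mem' := ⟨X, by simp⟩
  add_mem' := by
    rintro f g ⟨P, hP⟩ ⟨Q, hQ⟩
    exact ⟨P + Q, fun x ↦ (congrArg₂ (· + ·) (hP x) (hQ x)).trans eval_add.symm⟩
  zero_mem' := ⟨0, by simp⟩
  neg_mem' := by
    rintro f ⟨P, hP⟩
    exact ⟨-P, fun x ↦ (congrArg (- ·) (hP x)).trans (eval_neg P x).symm⟩

theorem surjective_of_mem_polynomialEnd {L : Type*} [Field L] [IsAlgClosed L]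
    {f : AddMonoid.End L} (hf : f ∈ polynomialEnd L) (hf0 : f ≠ 0) : Function.Surjective f := by
  obtain ⟨P, hP⟩ := hf
  have hdeg : P.natDegree ≠ 0 := fun h0 ↦ hf0 <| by
    obtain ⟨c, rfl⟩ := natDegree_eq_zero.mp h0
    have hc : c = 0 := by simpa using (hP 0).symm
    ext x
    simp [hP, hc]
  rw [show ⇑f = P.eval from funext hP]
  exact IsAlgClosed.eval_surjective hdeg

instance {L : Type*} [Field L] [IsAlgClosed L] : IsDomain (polynomialEnd L) := by
  have : Nontrivial (polynomialEnd L) :=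
    ⟨1, 0, fun h ↦ one_ne_zero (α := L) <| by
      simpa using DFunLike.congr_fun (congrArg Subtype.val h) (1 : L)⟩
  have : NoZeroDivisors (polynomialEnd L) := by
    refine ⟨fun {f g} hfg ↦ or_iff_not_imp_right.mpr fun hg ↦ Subtype.ext <| AddMonoidHom.ext ?_⟩
    have hsurj := surjective_of_mem_polynomialEnd g.2 (Subtype.coe_injective.ne hg)
    exact hsurj.forall.mpr fun x ↦ DFunLike.congr_fun (congrArg Subtype.val hfg) x
  exact NoZeroDivisors.to_isDomain _

theorem eps_ell_eq_power_of_min_poly_general {A L Ω ι : Type*} [CommRing A] [IsDomain A]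
    [IsIntegrallyClosed A] [Field L] [IsAlgClosed L] [CommRing Ω] [Fintype ι]
    {φ : A →+* AddMonoid.End L} (hφ : Function.Injective φ) (hφL : ∀ a, φ a ∈ polynomialEnd L)
    {π : AddMonoid.End L} (hπL : π ∈ polynomialEnd L) (hπ : ∀ a, Commute (φ a) π)
    (h : A[X]) {Q Q' : A[X]} (hQ : IsMinimalPolynomial φ π Q)
    (hQ' : IsMinimalPolynomial φ (h.eval₂ φ π) Q')
    {f : A →+* Ω} (hf : Function.Injective f) {α : ι → Ω}
    (hα : Q.map f = ∏ i, (X - C (α i))) :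
    Q'.natDegree ∣ Q.natDegree ∧
      ∏ i, (X - C (h.eval₂ f (α i))) = (Q'.map f) ^ (Q.natDegree / Q'.natDegree) := by
  let φ' : A →+* polynomialEnd L := φ.codRestrict _ hφL
  let x : polynomialEnd L := ⟨π, hπL⟩
  let incl := (polynomialEnd L).subtype
  have hincl : Function.Injective incl := Subtype.val_injective
  have hQx : IsMinimalPolynomial φ' x Q := .of_comp_injective hincl hQ
  have hQx' : IsMinimalPolynomial φ' (h.eval₂ φ' x) Q' :=
    .of_comp_injective hincl (by rwa [hom_eval₂])
  have hφ' : Function.Injective φ' := fun a b hab ↦ hφ (congrArg incl hab)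
  have hx (a : A) : Commute (φ' a) x := Subtype.ext (hπ a).eq
  obtain ⟨e, he⟩ := hQx.exists_prod_X_sub_C_eval₂_eq_map_pow hφ' hx hQx' hf hα
  have : Nontrivial Ω := hf.nontrivial
  have hdeg : Q.natDegree = e * Q'.natDegree := by
    rw [← hQ'.monic.natDegree_map f, ← (hQ'.monic.map f).natDegree_pow, ← he,
      ← hQ.monic.natDegree_map f, hα]
    simp [natDegree_prod_of_monic, monic_X_sub_C]
  rw [hdeg, Nat.mul_div_cancel _ hQx'.natDegree_pos]
  exact ⟨Dvd.intro_left e rfl, he⟩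

section PolynomialRing

theorem map_mem_of_C_of_X {F R : Type*} [Semiring F] [Ring R] (φ : F[X] →+* R) {S : Subring R}
    (hC : ∀ a, φ (C a) ∈ S) (hX : φ X ∈ S) (g : F[X]) : φ g ∈ S := by
  induction g using Polynomial.induction_on' with
  | add g h hg hh => exact map_add φ g h ▸ S.add_mem hg hh
  | monomial n a =>
    rw [← C_mul_X_pow_eq_monomial, map_mul, map_pow]
    exact S.mul_mem (hC a) (S.pow_mem hX n)

theorem commute_map_of_C_of_X {F R : Type*} [Semiring F] [Ring R] (φ : F[X] →+* R) {x : R}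
    (hC : ∀ a, Commute (φ (C a)) x) (hX : Commute (φ X) x) (g : F[X]) : Commute (φ g) x := by
  have hmem {y : R} : y ∈ Subring.centralizer {x} ↔ Commute y x := by
    simp [Subring.mem_centralizer_iff, commute_iff_eq, eq_comm]
  exact hmem.mp <| map_mem_of_C_of_X φ (fun a ↦ hmem.mpr (hC a)) (hmem.mpr hX) g

theorem natDegree_sum_range_C_mul_X_pow {R : Type*} [Semiring R] {e : ℕ → ℕ} (he : StrictMono e)
    (c : ℕ → R) {r : ℕ} (hc : c r ≠ 0) :
    (∑ i ∈ Finset.range (r + 1), C (c i) * X ^ e i).natDegree = e r := by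
  refine natDegree_eq_of_le_of_coeff_ne_zero ?_ ?_
  · refine natDegree_sum_le_of_forall_le _ _ fun i hi ↦ (natDegree_C_mul_X_pow_le _ _).trans ?_
    exact he.monotone (Finset.mem_range_succ_iff.mp hi)
  · simpa [finsetSum_coeff, coeff_X_pow, he.injective.eq_iff] using hc

theorem exists_eval_and_natDegree_eq_pow {F L : Type*} [Field F] [CommRing L] [IsDomain L]
    {φ : F[X] →+* AddMonoid.End L} {c : F →+* L} (hC : ∀ a x, φ (C a) x = c a * x) {P : L[X]}
    (hX : ∀ x, φ X x = P.eval x) (hP : 1 < P.natDegree) {g : F[X]} (hg : 0 < g.degree) :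
    ∃ G : L[X], (∀ x, φ g x = G.eval x) ∧ G.natDegree = P.natDegree ^ g.natDegree := by
  refine degree_pos_induction_on g hg (fun {a} ha ↦ ?_) (fun {g} hg ih ↦ ?_) fun {g a} hg ih ↦ ?_
  · exact ⟨C (c a) * P, by simp [hC, hX],
      by rw [natDegree_C_mul (by simpa using ha), natDegree_C_mul_X a ha, pow_one]⟩
  · obtain ⟨G, hG, hGdeg⟩ := ih
    exact ⟨G.comp P, by simp [hG, hX],
      by rw [natDegree_comp, hGdeg, natDegree_mul_X (ne_zero_of_degree_gt hg), pow_succ]⟩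
  · obtain ⟨G, hG, hGdeg⟩ := ih
    have hlt : (C (c a) * X).natDegree < G.natDegree := by
      have := Nat.one_lt_pow (natDegree_pos_iff_degree_pos.mpr hg).ne' hP
      exact (natDegree_C_mul_le _ _).trans_lt (by rwa [natDegree_X, hGdeg])
    refine ⟨G + C (c a) * X, fun x ↦ ?_, ?_⟩
    · rw [map_add, eval_add, ← hG, eval_C_mul, eval_X, ← hC]
      rfl
    · rw [natDegree_add_eq_left_of_natDegree_lt hlt, hGdeg, natDegree_add_C]

theorem injective_of_one_lt_natDegree {F L : Type*} [Field F] [CommRing L] [IsDomain L]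
    [Infinite L] {φ : F[X] →+* AddMonoid.End L} {c : F →+* L} (hC : ∀ a x, φ (C a) x = c a * x)
    {P : L[X]} (hX : ∀ x, φ X x = P.eval x) (hP : 1 < P.natDegree) : Function.Injective φ := by
  refine (injective_iff_map_eq_zero φ).mpr fun g hg ↦ ?_
  obtain hdeg | hdeg := le_or_gt g.degree 0
  · rw [eq_C_of_degree_le_zero hdeg] at hg ⊢
    simpa [hg] using (hC (g.coeff 0) 1).symm
  · obtain ⟨G, hG, hGdeg⟩ := exists_eval_and_natDegree_eq_pow hC hX hP hdeg
    have hG0 : G = 0 := Polynomial.funext fun x ↦ by simp [← hG, hg]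
    have := pow_pos (zero_lt_one.trans hP) g.natDegree
    simp [← hGdeg, hG0] at this

end PolynomialRing

section Drinfeld

variable {k : Type*} [Field k] {p ν : ℕ} [Fact p.Prime] [CharP k p]

theorem twistTau_pow_apply (i : ℕ) (x : AlgebraicClosure k) :
    (twistTau k p ν ^ i) x = x ^ p ^ (ν * i) := by
  induction i generalizing x with
  | zero => simp
  | succ i ih =>
    rw [pow_succ, AddMonoid.End.coe_mul, Function.comp_apply, ih, mul_add_one, add_comm, pow_add,
      pow_mul x]
    rfl

theorem scalarEnd_apply (c : k) (x : AlgebraicClosure k) :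
    scalarEnd k c x = algebraMap k (AlgebraicClosure k) c * x := rfl

theorem twistTau_mem_polynomialEnd : twistTau k p ν ∈ polynomialEnd (AlgebraicClosure k) :=
  ⟨X ^ p ^ ν, fun x ↦ by simpa using twistTau_pow_apply 1 x⟩

theorem scalarEnd_mem_polynomialEnd (c : k) :
    scalarEnd k c ∈ polynomialEnd (AlgebraicClosure k) :=
  ⟨C (algebraMap k _ c) * X, fun x ↦ by simp [scalarEnd_apply]⟩

theorem commute_scalarEnd_twistTau_pow {c : k} {n : ℕ} (hc : c ^ p ^ (ν * n) = c) :
    Commute (scalarEnd k c) (twistTau k p ν ^ n) := by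
  ext x
  change scalarEnd k c ((twistTau k p ν ^ n) x) = (twistTau k p ν ^ n) (scalarEnd k c x)
  simp only [twistTau_pow_apply, scalarEnd_apply, mul_pow, ← map_pow, hc]

theorem sum_scalarEnd_mul_twistTau_pow_apply (t : ℕ → k) (s : Finset ℕ) (x : AlgebraicClosure k) :
    (∑ i ∈ s, scalarEnd k (t i) * twistTau k p ν ^ i) x =
      (∑ i ∈ s, C (algebraMap k (AlgebraicClosure k) (t i)) * X ^ p ^ (ν * i)).eval x := by
  rw [eval_finsetSum]
  refine (AddMonoidHom.finsetSum_apply _ _ _).trans (Finset.sum_congr rfl fun i _ ↦ ?_)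
  change scalarEnd k (t i) ((twistTau k p ν ^ i) x) = _
  rw [scalarEnd_apply, twistTau_pow_apply, eval_C_mul, eval_X_pow]

/-- `φ` is the Drinfeld module of rank `r` over `k` with `φ_T = ∑ tᵢ τⁱ`, where `τ` is the
`p ^ ν`-power Frobenius. It is viewed as an action on `AlgebraicClosure k`, and `t i` is ignored
for `i > r`. -/
structure IsDrinfeldModule {F : Type*} [Field F] [Algebra F k] (p ν : ℕ) [Fact p.Prime] [CharP k p]
    (φ : F[X] →+* AddMonoid.End (AlgebraicClosure k)) (t : ℕ → k) (r : ℕ) : Prop where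
  rank_pos : 0 < r
  map_C : ∀ a, φ (C a) = scalarEnd k (algebraMap F k a)
  map_X : φ X = ∑ i ∈ Finset.range (r + 1), scalarEnd k (t i) * twistTau k p ν ^ i
  leadingCoeff_ne_zero : t r ≠ 0

namespace IsDrinfeldModule

variable {F : Type*} [Field F] [Algebra F k] {φ : F[X] →+* AddMonoid.End (AlgebraicClosure k)}
  {t : ℕ → k} {r : ℕ}

theorem map_mem_polynomialEnd (hφ : IsDrinfeldModule p ν φ t r) (g : F[X]) :
    φ g ∈ polynomialEnd (AlgebraicClosure k) := by
  refine map_mem_of_C_of_X φ (fun a ↦ hφ.map_C a ▸ scalarEnd_mem_polynomialEnd _) ?_ g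
  exact hφ.map_X ▸ sum_mem fun i _ ↦
    mul_mem (scalarEnd_mem_polynomialEnd _) (pow_mem twistTau_mem_polynomialEnd i)

theorem commute_twistTau_pow (hφ : IsDrinfeldModule p ν φ t r) {n : ℕ}
    (hF : ∀ a, algebraMap F k a ^ p ^ (ν * n) = algebraMap F k a)
    (ht : ∀ i, t i ^ p ^ (ν * n) = t i) (g : F[X]) : Commute (φ g) (twistTau k p ν ^ n) := by
  refine commute_map_of_C_of_X φ (fun a ↦ hφ.map_C a ▸ commute_scalarEnd_twistTau_pow (hF a)) ?_ g
  exact hφ.map_X ▸ Commute.sum_left _ _ _ fun i _ ↦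
    (commute_scalarEnd_twistTau_pow (ht i)).mul_left (.pow_pow_self _ _ _)

theorem injective (hφ : IsDrinfeldModule p ν φ t r) (hν : 0 < ν) : Function.Injective φ := by
  have hp : 1 < p := (Fact.out : p.Prime).one_lt
  refine injective_of_one_lt_natDegree (c := (algebraMap k _).comp (algebraMap F k))
    (P := ∑ i ∈ Finset.range (r + 1), C (algebraMap k _ (t i)) * X ^ p ^ (ν * i))
    (fun a x ↦ by simp [hφ.map_C, scalarEnd_apply])
    (fun x ↦ hφ.map_X ▸ sum_scalarEnd_mul_twistTau_pow_apply t _ x) ?_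
  rw [natDegree_sum_range_C_mul_X_pow (e := fun i ↦ p ^ (ν * i))
    ((pow_right_strictMono₀ hp).comp (strictMono_mul_left_of_pos hν)) _
    (by simpa using hφ.leadingCoeff_ne_zero)]
  exact Nat.one_lt_pow (Nat.mul_pos hν hφ.rank_pos).ne' hp

end IsDrinfeldModule

end Drinfeld

theorem coeffToClosure_injective {F : Type*} [Field F] [Fintype F] :
    Function.Injective (coeffToClosure F) :=
  (algebraMap (RatFunc F) _).injective.comp (IsFractionRing.injective F[X] (RatFunc F))

/-- with `Q_{φ^{(ℓ)}}` the minimal polynomial of the Frobenius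
`π_ℓ = τ^{mℓ}` of the Drinfeld module `φ^{(ℓ)}` and `d_ℓ = deg Q_{φ^{(ℓ)}}`, one has
`ε_ℓ(Q_{φ^{(1)}}) = (Q_{φ^{(ℓ)}})^{d₁/d_ℓ}`; in particular `d_ℓ` divides `d₁`. -/
theorem eps_ell_eq_power_of_min_poly
    (p ν : ℕ) [Fact p.Prime] (hν : 0 < ν)
    (F : Type*) [Field F] [Fintype F] (hq : Fintype.card F = p ^ ν)
    (E : Type*) [Field E] [Fintype E] [Algebra F E]
    (k : Type*) [Field k] [Fintype k] [CharP k p] [Algebra F k] [Algebra E k]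
    [IsScalarTower F E k]
    (m ℓ : ℕ) (hm : 1 ≤ m) (hℓ : 1 ≤ ℓ)
    (hcardE : Fintype.card E = p ^ (ν * m))
    (hcardk : Fintype.card k = p ^ (ν * m * ℓ))
    (r : ℕ) (hr : 1 ≤ r)
    (φ : Polynomial F →+* AddMonoid.End (AlgebraicClosure k))
    (hφC : ∀ a : F, φ (C a) = scalarEnd k (algebraMap F k a))
    (t : ℕ → E) (htr : t r ≠ 0)
    (hφX : φ X = ∑ i ∈ Finset.range (r + 1),
      scalarEnd k (algebraMap E k (t i)) * (twistTau k p ν) ^ i)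
    -- `Q_{φ^{(1)}}` : the minimal monic polynomial of `π₁ = τ^m` over `𝔽_q[T]`
    (Q1 : Polynomial (Polynomial F)) (hQ1monic : Q1.Monic)
    (hQ1root : Polynomial.eval₂ φ ((twistTau k p ν) ^ m) Q1 = 0)
    (hQ1min : ∀ g : Polynomial (Polynomial F), g.Monic →
      Polynomial.eval₂ φ ((twistTau k p ν) ^ m) g = 0 → Q1.natDegree ≤ g.natDegree)
    -- `Q_{φ^{(ℓ)}}` : the minimal monic polynomial of `π_ℓ = τ^{mℓ}` over `𝔽_q[T]`
    (Ql : Polynomial (Polynomial F)) (hQlmonic : Ql.Monic)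
    (hQlroot : Polynomial.eval₂ φ ((twistTau k p ν) ^ (m * ℓ)) Ql = 0)
    (hQlmin : ∀ g : Polynomial (Polynomial F), g.Monic →
      Polynomial.eval₂ φ ((twistTau k p ν) ^ (m * ℓ)) g = 0 → Ql.natDegree ≤ g.natDegree)
    -- the roots of `Q_{φ^{(1)}}` in `Ω`, with multiplicity
    (α : Fin Q1.natDegree → AlgebraicClosure (RatFunc F))
    (hα : Q1.map (coeffToClosure F) = ∏ i, (X - C (α i))) :
    Ql.natDegree ∣ Q1.natDegree ∧
    ∏ i, (X - C (α i ^ ℓ))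
      = (Ql.map (coeffToClosure F)) ^ (Q1.natDegree / Ql.natDegree) := by
  have hE (e : E) : algebraMap E k e ^ p ^ (ν * m) = algebraMap E k e := by
    rw [← map_pow, ← hcardE, FiniteField.pow_card]
  have hF (a : F) : algebraMap F k a ^ p ^ (ν * m) = algebraMap F k a := by
    rw [IsScalarTower.algebraMap_apply F E k, hE]
  have hφ : IsDrinfeldModule p ν φ (fun i ↦ algebraMap E k (t i)) r :=
    ⟨hr, hφC, hφX, by simpa using htr⟩
  have hQl : IsMinimalPolynomial φ ((X ^ ℓ).eval₂ φ (twistTau k p ν ^ m)) Ql := by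
    rw [eval₂_X_pow, ← pow_mul]
    exact ⟨hQlmonic, hQlroot, hQlmin⟩
  simpa using eps_ell_eq_power_of_min_poly_general (hφ.injective hν) hφ.map_mem_polynomialEnd
    (pow_mem twistTau_mem_polynomialEnd m) (hφ.commute_twistTau_pow hF fun i ↦ hE (t i)) (X ^ ℓ)
    ⟨hQ1monic, hQ1root, hQ1min⟩ hQl coeffToClosure_injective hα
end

section
/- Let C_L^{(ℓ)} ∈ 𝔽_q[T] denote the characteristic polynomial of the 𝔽_q-linear map induced by the q-linearized polynomial L (of q-degree r, defined over 𝔽_{q^m}) on the field 𝔽_{q^{mℓ}}. Then the sequence {C_L^{(ℓ)}}_{ℓ≥1} is a linear recurrence sequence over 𝔽_q[T] of order at most 2^r. -/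
open Polynomial

/-- The `𝔽_q`-linear map on `K` induced by the `q`-linearized polynomial
`L = Σ_{i=0}^r tᵢ Z^{qⁱ}`, i.e. `x ↦ Σ_{i=0}^r tᵢ x^{qⁱ}`. -/
noncomputable def qLinearMap (F : Type*) [Field F] [Fintype F] (p ν : ℕ) [Fact p.Prime]
    (hq : Fintype.card F = p ^ ν)
    (K : Type*) [Field K] [CharP K p] [Algebra F K] (r : ℕ) (t : ℕ → K) : K →ₗ[F] K where
  toFun x := ∑ i ∈ Finset.range (r + 1), t i * x ^ (Fintype.card F ^ i)
  map_add' x y := by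
    rw [← Finset.sum_add_distrib]
    refine Finset.sum_congr rfl fun i _ => ?_
    rw [hq, ← pow_mul, add_pow_char_pow, mul_add]
  map_smul' c x := by
    simp only [Algebra.smul_def, RingHom.id_apply, Finset.mul_sum]
    refine Finset.sum_congr rfl fun i _ => ?_
    rw [mul_pow, ← map_pow, FiniteField.pow_card_pow]
    ring

/-!
On `K = 𝔽_{q^{mℓ}}` the conjugates `x, x^q, x^{q²}, …` of a point are shifted by Frobenius, so in
these coordinates `L` is a difference operator on `ℤ/mℓ` with `m`-periodic coefficients. Grouping
the indices by residue modulo `m` gives `C_L^{(ℓ)} = det G(S)`, where `S` is the cyclic shift of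
length `ℓ` and `G` is a polynomial over `𝔽_{q^m}[T]` of degree `r`, with unit leading coefficient,
that does not depend on `ℓ`. Over an algebraically closed field `det G(S) = g^ℓ * ∏ (b^ℓ - 1)`,
where `b` runs over the `r` roots of `G` and `g` is its leading coefficient up to sign. Expanding
the product gives a combination of `2^r` geometric sequences. Their ratios are integral over
`𝔽_q[T]`, and a finite extension of this principal ideal domain retracts linearly onto it, so the
recurrence descends to `𝔽_q[T]`.
-/

open Matrix (diagonal scalar)

section LinearRecurrence

variable {R : Type*} [CommRing R]

lemma exists_charPoly_eq {Q : R[X]} (hQ : Q.Monic) {d : ℕ} (hd : Q.natDegree = d) :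
    ∃ c : Fin d → R, LinearRecurrence.charPoly ⟨d, c⟩ = Q := by
  refine ⟨fun i ↦ -Q.coeff i, ?_⟩
  conv_rhs => rw [Q.as_sum_range, Finset.sum_range_succ, hQ.coeff_natDegree, hd, Finset.sum_range]
  simp [LinearRecurrence.charPoly, add_comm]

lemma exists_isSolution_pow (s : Multiset R) :
    ∃ c : Fin s.card → R, ∀ γ ∈ s, LinearRecurrence.IsSolution ⟨s.card, c⟩ (γ ^ ·) := by
  cases subsingleton_or_nontrivial R
  · exact ⟨0, fun _ _ _ ↦ Subsingleton.elim _ _⟩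
  obtain ⟨c, hc⟩ := exists_charPoly_eq (monic_multisetProd_X_sub_C s)
    (natDegree_multiset_prod_X_sub_C_eq_card s)
  refine ⟨c, fun γ hγ ↦ (LinearRecurrence.geom_sol_iff_root_charPoly _ γ).2 ?_⟩
  rw [hc]
  exact dvd_iff_isRoot.1 (Multiset.dvd_prod (Multiset.mem_map_of_mem _ hγ))

lemma pow_mul_prod_pow_sub_one (g : R) (s : Multiset R) (n : ℕ) :
    g ^ n * (s.map fun b ↦ b ^ n - 1).prod =
      (s.antidiagonal.map fun p ↦ (-1) ^ p.2.card * (g * p.1.prod) ^ n).sum := by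
  simp only [sub_eq_add_neg, Multiset.prod_map_add, Multiset.map_const', Multiset.prod_replicate,
    Multiset.prod_map_pow, Multiset.map_id', mul_pow, ← Multiset.sum_map_mul_left]
  exact congrArg Multiset.sum (Multiset.map_congr rfl fun p _ ↦ by ring)

lemma exists_isSolution_pow_mul_prod_pow_sub_one (g : R) (s : Multiset R) :
    ∃ c : Fin (2 ^ s.card) → R, LinearRecurrence.IsSolution ⟨2 ^ s.card, c⟩
      fun n ↦ g ^ (n + 1) * (s.map fun b ↦ b ^ (n + 1) - 1).prod := by
  have h := exists_isSolution_pow (s.antidiagonal.map fun p ↦ g * p.1.prod)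
  rw [Multiset.card_map, Multiset.card_antidiagonal] at h
  obtain ⟨c, hc⟩ := h
  refine ⟨c, (LinearRecurrence.is_sol_iff_mem_solSpace _ _).2 ?_⟩
  have expansion : (fun n ↦ g ^ (n + 1) * (s.map fun b ↦ b ^ (n + 1) - 1).prod) =
      (s.antidiagonal.map fun p ↦
        ((-1) ^ p.2.card * (g * p.1.prod)) • fun n ↦ (g * p.1.prod) ^ n).sum := by
    ext n
    rw [pow_mul_prod_pow_sub_one, ← Pi.evalAddMonoidHom_apply (fun _ ↦ R) n (Multiset.sum _),
      map_multiset_sum, Multiset.map_map]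
    simp only [Function.comp_apply, Pi.evalAddMonoidHom_apply, Pi.smul_apply, smul_eq_mul,
      pow_succ', mul_assoc]
  rw [expansion]
  refine multiset_sum_mem _ fun v hv ↦ ?_
  obtain ⟨p, hp, rfl⟩ := Multiset.mem_map.1 hv
  exact Submodule.smul_mem _ _ ((LinearRecurrence.is_sol_iff_mem_solSpace _ _).1
    (hc _ (Multiset.mem_map_of_mem _ hp)))

end LinearRecurrence

section Descent

variable {A S : Type*} [CommRing A] [IsDomain A] [IsPrincipalIdealRing A] [CommRing S]
  [IsDomain S] [Algebra A S] [FaithfulSMul A S]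

lemma exists_linearMap_apply_one_eq_one [Module.Finite A S] : ∃ ρ : S →ₗ[A] A, ρ 1 = 1 := by
  -- The values `ρ 1` form an ideal `(d)`, and `d` divides all coordinates of `1`, so it is a unit.
  let evalOne : (S →ₗ[A] A) →ₗ[A] A := LinearMap.applyₗ 1
  obtain ⟨d, hd⟩ := IsPrincipalIdealRing.principal (LinearMap.range evalOne)
  let b := Module.Free.chooseBasis A S
  have dvd_coord (i) : d ∣ b.coord i 1 := by
    have coord_mem := LinearMap.mem_range_self evalOne (b.coord i)
    rw [hd] at coord_mem
    exact Ideal.mem_span_singleton.1 coord_mem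
  choose a ha using dvd_coord
  have d_mul : algebraMap A S d * ∑ i, a i • b i = 1 := by
    rw [← Algebra.smul_def, Finset.smul_sum, ← b.sum_repr 1]
    simp only [smul_smul, ← ha, b.coord_apply]
  have d_unit : IsUnit d := (IsUnit.of_mul_eq_one _ d_mul).of_map (algebraMap A S) d
  change (1 : A) ∈ LinearMap.range evalOne
  rw [hd]
  exact Ideal.mem_span_singleton.2 d_unit.dvd

lemma exists_isSolution_of_algebraMap [Algebra.IsIntegral A S] (rec : LinearRecurrence S)
    {u : ℕ → A} (hu : rec.IsSolution fun n ↦ algebraMap A S (u n)) :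
    ∃ c : Fin rec.order → A, LinearRecurrence.IsSolution ⟨rec.order, c⟩ u := by
  let B := Algebra.adjoin A (Set.range rec.coeffs)
  have : Module.Finite A B := Algebra.finite_adjoin_of_finite_of_isIntegral
    (Set.finite_range _) fun x _ ↦ Algebra.IsIntegral.isIntegral x
  obtain ⟨ρ, hρ⟩ := exists_linearMap_apply_one_eq_one (A := A) (S := B)
  let c (i : Fin rec.order) : B := ⟨rec.coeffs i, Algebra.subset_adjoin ⟨i, rfl⟩⟩
  refine ⟨fun i ↦ ρ (c i), fun n ↦ ?_⟩
  have hB : u (n + rec.order) • (1 : B) = ∑ i : Fin rec.order, u (n + i) • c i := by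
    apply Subtype.ext
    simpa [Algebra.smul_def, mul_comm, c] using hu n
  simpa [hρ, mul_comm] using congrArg ρ hB

end Descent

section CyclicShift

/-- The shift `(u j) ↦ (u (j + 1))` on sequences with `u (j + m) = x * u j`, as a matrix acting on
the column vector `(u 0, …, u (m - 1))`. -/
def cyclicShift {R : Type*} [Semiring R] (m : ℕ) (x : R) : Matrix (Fin m) (Fin m) R :=
  Matrix.of fun a b ↦ if (b : ℕ) = (a + 1) % m then x ^ ((a + 1) / m : ℕ) else 0

variable {R : Type*} [CommRing R] {m : ℕ}

lemma cyclicShift_pow_apply (x : R) (k : ℕ) (a b : Fin m) :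
    (cyclicShift m x ^ k) a b = if (b : ℕ) = (a + k) % m then x ^ ((a + k) / m : ℕ) else 0 := by
  have m_pos : 0 < m := a.pos
  induction k generalizing b with
  | zero => simp [Matrix.one_apply, Nat.mod_eq_of_lt, Nat.div_eq_of_lt, Fin.ext_iff, eq_comm]
  | succ k ih =>
    have carry : (a + (k + 1)) / m = (a + k) / m + ((a + k) % m + 1) / m := by
      rw [← Nat.mul_add_div m_pos, ← add_assoc (m * _), Nat.div_add_mod, add_assoc]
    let c : Fin m := ⟨(a + k) % m, Nat.mod_lt _ m_pos⟩
    rw [pow_succ, Matrix.mul_apply, Finset.sum_eq_single c]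
    · rw [ih, if_pos rfl, carry, pow_add]
      simp [cyclicShift, c, add_assoc]
    · intro d _ hd
      rw [ih, if_neg (fun h ↦ hd (Fin.ext h)), zero_mul]
    · simp

lemma cyclicShift_map {S : Type*} [CommRing S] (f : R →+* S) (x : R) :
    (cyclicShift m x).map f = cyclicShift m (f x) := by
  ext a b
  simp [cyclicShift, apply_ite f]

lemma cyclicShift_pow_mulVec {x : R} {u : ℕ → R} (hu : ∀ j, u (j + m) = x * u j) (k : ℕ) :
    (cyclicShift m x ^ k).mulVec (fun a ↦ u a) = fun a : Fin m ↦ u (a + k) := by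
  have u_add_mul (j d : ℕ) : u (j + m * d) = x ^ d * u j := by
    induction d with
    | zero => simp
    | succ d ih => rw [mul_add_one, ← add_assoc, hu, ih, pow_succ', mul_assoc]
  ext a
  let c : Fin m := ⟨(a + k) % m, Nat.mod_lt _ a.pos⟩
  rw [Matrix.mulVec, dotProduct, Finset.sum_eq_single c]
  · rw [cyclicShift_pow_apply, if_pos rfl, ← u_add_mul, Nat.mod_add_div]
  · intro d _ hd
    rw [cyclicShift_pow_apply, if_neg (fun h ↦ hd (Fin.ext h)), zero_mul]
  · simp

lemma cyclicShift_pow_self (x : R) : cyclicShift m x ^ m = scalar (Fin m) x := by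
  ext a b
  simp [cyclicShift_pow_apply, Matrix.scalar_apply, Matrix.diagonal_apply, Nat.mod_eq_of_lt,
    Nat.add_div_right _ a.pos, Nat.div_eq_of_lt, Fin.ext_iff, eq_comm]

lemma eq_zero_of_aeval_cyclicShift_eq_zero (x : R) {P : R[X]} (hP : P.degree < m)
    (h : aeval (cyclicShift m x) P = 0) : P = 0 := by
  by_contra P_ne
  have deg_lt : P.natDegree < m := (natDegree_lt_iff_degree_lt P_ne).2 hP
  have entry : ∀ k ∈ Finset.range (P.natDegree + 1),
      (P.coeff k • cyclicShift m x ^ k) ⟨0, P.natDegree.zero_le.trans_lt deg_lt⟩ ⟨_, deg_lt⟩ =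
        if P.natDegree = k then P.coeff k else 0 := by
    intro k hk
    have hkm : k < m := (Finset.mem_range_succ_iff.1 hk).trans_lt deg_lt
    simp [cyclicShift_pow_apply, Nat.mod_eq_of_lt hkm, Nat.div_eq_of_lt hkm]
  have coeff_eq := congrFun₂ h ⟨0, P.natDegree.zero_le.trans_lt deg_lt⟩ ⟨_, deg_lt⟩
  rw [aeval_eq_sum_range, Matrix.sum_apply, Finset.sum_congr rfl entry, Finset.sum_ite_eq,
    if_pos (Finset.self_mem_range_succ _)] at coeff_eq
  exact P_ne (leadingCoeff_eq_zero.1 coeff_eq)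

lemma charpoly_cyclicShift (hm : 0 < m) (x : R) :
    (cyclicShift m x).charpoly = X ^ m - C x := by
  nontriviality R
  refine sub_eq_zero.1 (eq_zero_of_aeval_cyclicShift_eq_zero (m := m) x ?_ ?_)
  · have degree_charpoly := Matrix.charpoly_degree_eq_dim (cyclicShift m x)
    rw [Fintype.card_fin] at degree_charpoly
    rw [← degree_charpoly]
    exact degree_sub_lt_left (degree_charpoly.trans (degree_X_pow_sub_C hm x).symm)
      (Matrix.charpoly_monic _).ne_zero
      ((Matrix.charpoly_monic _).leadingCoeff.trans (leadingCoeff_X_pow_sub_C hm).symm)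
  · rw [map_sub, Matrix.aeval_self_charpoly, map_sub, map_pow, aeval_X, aeval_C,
      cyclicShift_pow_self, zero_sub, neg_eq_zero]
    exact sub_self (scalar (Fin m) x)

lemma isUnit_det_cyclicShift_one (hm : 0 < m) : IsUnit (cyclicShift m (1 : R)).det := by
  refine IsUnit.of_pow_eq_one (n := m) ?_ hm.ne'
  rw [← Matrix.det_pow, cyclicShift_pow_self, map_one, Matrix.det_one]

end CyclicShift

section Split

variable {K : Type*} [Field K]

lemma det_aeval_of_splits {n : Type*} [Fintype n] [DecidableEq n] {G : K[X]} (hG : G.Splits)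
    (M : Matrix n n K) :
    (aeval M G).det = (G.leadingCoeff * (-1) ^ G.roots.card) ^ Fintype.card n *
        (G.roots.map M.charpoly.eval).prod := by
  let detAeval : K[X] →* K := Matrix.detMonoidHom.comp (aeval (R := K) M : K[X] →* Matrix n n K)
  have detAeval_C (a : K) : detAeval (C a) = a ^ Fintype.card n := by
    change (aeval M (C a)).det = _
    simp [Matrix.algebraMap_eq_diagonal]
  have detAeval_X_sub_C (b : K) :
      detAeval (X - C b) = (-1) ^ Fintype.card n * M.charpoly.eval b := by
    change (aeval M (X - C b)).det = _
    rw [Matrix.eval_charpoly, ← Matrix.det_neg, neg_sub, map_sub, aeval_X, aeval_C]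
    rfl
  calc (aeval M G).det
    _ = detAeval (C G.leadingCoeff * (G.roots.map fun b ↦ X - C b).prod) :=
      congrArg detAeval hG.eq_prod_roots
    _ = G.leadingCoeff ^ Fintype.card n *
          (G.roots.map fun b ↦ (-1) ^ Fintype.card n * M.charpoly.eval b).prod := by
      rw [map_mul, detAeval_C, map_multiset_prod, Multiset.map_map]
      simp only [Function.comp_apply, detAeval_X_sub_C]
    _ = _ := by
      rw [Multiset.prod_map_mul, Multiset.map_const', Multiset.prod_replicate]
      ring

lemma det_aeval_cyclicShift_one {G : K[X]} (hG : G.Splits) {n : ℕ} (hn : 0 < n) :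
    (aeval (cyclicShift n (1 : K)) G).det =
      (G.leadingCoeff * (-1) ^ G.roots.card) ^ n * (G.roots.map fun b ↦ b ^ n - 1).prod := by
  simp [det_aeval_of_splits hG, charpoly_cyclicShift hn]

end Split

section DifferenceMatrix

variable {R : Type*} [CommRing R] {m : ℕ}

/-- The operator `u ↦ τ u - ∑ i ≤ r, s i * u (· + i)` on sequences with `u (j + m) = x * u j`, where
the coefficients `s i` are `m`-periodic, in the coordinates of `cyclicShift`. -/
def differenceMatrix (r : ℕ) (s : ℕ → Fin m → R) (τ x : R) : Matrix (Fin m) (Fin m) R :=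
  scalar (Fin m) τ - ∑ i ∈ Finset.range (r + 1), diagonal (s i) * cyclicShift m x ^ i

/-- The determinant of `differenceMatrix r s τ Y` as a polynomial in the indeterminate multiplier
`Y`. -/
noncomputable def differenceSymbol (r : ℕ) (s : ℕ → Fin m → R) (τ : R) : R[X] :=
  (differenceMatrix r (fun i a ↦ C (s i a)) (C τ) X).det

lemma mapMatrix_diagonal_mul_cyclicShift_pow {S : Type*} [CommRing S] (f : R →+* S) (v : Fin m → R)
    (x : R) (i : ℕ) :
    f.mapMatrix (diagonal v * cyclicShift m x ^ i) =
      diagonal (fun a ↦ f (v a)) * cyclicShift m (f x) ^ i := by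
  rw [map_mul, map_pow]
  exact congrArg₂ (· * · ^ i) (Matrix.diagonal_map (map_zero f)) (cyclicShift_map f x)

lemma differenceMatrix_map {S : Type*} [CommRing S] (f : R →+* S) (r : ℕ) (s : ℕ → Fin m → R)
    (τ x : R) :
    (differenceMatrix r s τ x).map f = differenceMatrix r (fun i a ↦ f (s i a)) (f τ) (f x) := by
  have map_scalar : f.mapMatrix (scalar (Fin m) τ) = scalar (Fin m) (f τ) :=
    Matrix.diagonal_map (map_zero f)
  rw [← RingHom.mapMatrix_apply, differenceMatrix, map_sub, map_sum, map_scalar]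
  simp only [mapMatrix_diagonal_mul_cyclicShift_pow, differenceMatrix]

lemma charpoly_sum_diagonal_mul_cyclicShift_pow (r : ℕ) (s : ℕ → Fin m → R) (x : R) :
    (∑ i ∈ Finset.range (r + 1), diagonal (s i) * cyclicShift m x ^ i).charpoly =
      (differenceMatrix r (fun i a ↦ C (s i a)) X (C x)).det := by
  rw [Matrix.charpoly, Matrix.charmatrix, map_sum]
  simp only [mapMatrix_diagonal_mul_cyclicShift_pow, differenceMatrix]

/-- The substitution `X ↦ cyclicShift n x` in the entries of a matrix over `R[X]`, read as a block
matrix. The basis vector `b : Fin n` of block `a : Fin m` has index `a + m * b`. -/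
noncomputable def unfoldShift (m n : ℕ) (x : R) :
    Matrix (Fin m) (Fin m) R[X] →+* Matrix (Fin (n * m)) (Fin (n * m)) R :=
  (Matrix.reindexRingEquiv R ((Equiv.prodComm _ _).trans finProdFinEquiv)).toRingHom.comp
    ((Matrix.compRingEquiv (Fin m) (Fin n) R).toRingHom.comp
      (aeval (cyclicShift n x)).toRingHom.mapMatrix)

lemma unfoldShift_apply (n : ℕ) (x : R) (M : Matrix (Fin m) (Fin m) R[X]) (i j : Fin (n * m)) :
    unfoldShift m n x M i j =
      aeval (cyclicShift n x) (M i.modNat j.modNat) i.divNat j.divNat := by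
  rfl

lemma unfoldShift_diagonal_C (n : ℕ) (x : R) (v : Fin m → R) :
    unfoldShift m n x (diagonal fun a ↦ C (v a)) = diagonal fun i ↦ v i.modNat := by
  ext i j
  have eq_iff : i = j ↔ i.modNat = j.modNat ∧ i.divNat = j.divNat := by
    rw [← finProdFinEquiv.symm.apply_eq_iff_eq, Prod.ext_iff, and_comm]
    rfl
  rw [unfoldShift_apply]
  by_cases hmod : i.modNat = j.modNat <;>
    simp [Matrix.diagonal_apply, hmod, eq_iff, Matrix.algebraMap_matrix_apply]

lemma unfoldShift_cyclicShift (n : ℕ) (x : R) :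
    unfoldShift m n x (cyclicShift m X) = cyclicShift (n * m) x := by
  ext i j
  let k : ℕ := (i.modNat + 1) / m
  have m_pos : 0 < m := i.modNat.pos
  have div_succ : (i + 1) / m = i.divNat + k := by
    conv_lhs => rw [← Nat.div_add_mod i m, add_assoc, Nat.mul_add_div m_pos]
    rfl
  have mod_succ : (i + 1) % m = (i.modNat + 1) % m := (Nat.mod_add_mod _ _ _).symm
  have wrap_div : (i + 1) / (n * m) = (i.divNat + k) / n := by
    rw [← div_succ, Nat.div_div_eq_div_mul, mul_comm m n]
  have wrap_mod : (j : ℕ) = (i + 1) % (n * m) ↔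
      (j.modNat : ℕ) = (i.modNat + 1) % m ∧ (j.divNat : ℕ) = (i.divNat + k) % n := by
    rw [Nat.ext_div_mod_iff m, Nat.mod_mul_left_mod, Nat.mod_mul_left_div_self, div_succ, mod_succ,
      and_comm]
    rfl
  rw [unfoldShift_apply]
  by_cases hmod : (j.modNat : ℕ) = (i.modNat + 1) % m
  · have entry : cyclicShift m (X : R[X]) i.modNat j.modNat = X ^ k := if_pos hmod
    rw [entry, map_pow, aeval_X, cyclicShift_pow_apply]
    simp only [cyclicShift, Matrix.of_apply, wrap_mod, hmod, true_and, wrap_div]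
  · simp only [map_zero, Matrix.zero_apply, cyclicShift, Matrix.of_apply, wrap_mod, hmod,
      false_and, if_false]

lemma det_unfoldShift (n : ℕ) (x : R) (M : Matrix (Fin m) (Fin m) R[X]) :
    (unfoldShift m n x M).det = (aeval (cyclicShift n x) M.det).det :=
  (Matrix.det_reindex_self _ _).trans
    (Matrix.det_det M (aeval (cyclicShift n x)).toRingHom).symm

lemma det_differenceMatrix_modNat (n r : ℕ) (s : ℕ → Fin m → R) (τ x : R) :
    (differenceMatrix (m := n * m) r (fun i j ↦ s i j.modNat) τ x).det =
      (aeval (cyclicShift n x) (differenceSymbol r s τ)).det := by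
  rw [differenceSymbol, ← det_unfoldShift]
  congr 1
  simp only [differenceMatrix, map_sub, map_sum, map_mul, map_pow, unfoldShift_diagonal_C,
    unfoldShift_cyclicShift, Matrix.scalar_apply]

-- Rescaling coordinates spreads the multiplier `x ^ m` evenly, as a factor `x` for each step.
lemma cyclicShift_pow_semiconjBy (x : R) :
    SemiconjBy (diagonal fun a : Fin m ↦ x ^ (a : ℕ)) (x • cyclicShift m 1)
      (cyclicShift m (x ^ m)) := by
  ext a b
  rw [Matrix.diagonal_mul, Matrix.mul_diagonal]
  by_cases hb : (b : ℕ) = (a + 1) % m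
  · have exponent : m * ((a + 1) / m) + b = a + 1 := hb ▸ Nat.div_add_mod _ _
    simp only [cyclicShift, Matrix.smul_apply, Matrix.of_apply, if_pos hb, one_pow, smul_eq_mul,
      mul_one, ← pow_mul, ← pow_add, exponent, pow_succ]
  · simp [cyclicShift, hb]

lemma det_differenceMatrix_pow (r : ℕ) (s : ℕ → Fin m → R) (τ : R) {x : R}
    (hx : x ∈ nonZeroDivisors R) :
    (differenceMatrix r s τ (x ^ m)).det =
      (scalar (Fin m) τ -
        ∑ i ∈ Finset.range (r + 1), diagonal (s i) * (x • cyclicShift m 1) ^ i).det := by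
  let D : Matrix (Fin m) (Fin m) R := diagonal fun a ↦ x ^ (a : ℕ)
  have det_D : D.det ∈ nonZeroDivisors R := by
    rw [Matrix.det_diagonal]
    exact prod_mem fun a _ ↦ pow_mem hx _
  have diagonal_comm (v : Fin m → R) : SemiconjBy D (diagonal v) (diagonal v) :=
    Matrix.commute_diagonal _ _
  have semiconj : SemiconjBy D
      (scalar (Fin m) τ - ∑ i ∈ Finset.range (r + 1), diagonal (s i) * (x • cyclicShift m 1) ^ i)
      (differenceMatrix r s τ (x ^ m)) := by
    refine (diagonal_comm _).sub_right ?_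
    rw [SemiconjBy, Finset.mul_sum, Finset.sum_mul]
    exact Finset.sum_congr rfl fun i _ ↦
      (diagonal_comm _).mul_right ((cyclicShift_pow_semiconjBy x).pow_right i)
  have det_eq := congrArg Matrix.det semiconj.eq
  rw [Matrix.det_mul, Matrix.det_mul, mul_comm] at det_eq
  exact ((mul_cancel_right_mem_nonZeroDivisors det_D).1 det_eq).symm

lemma expand_differenceSymbol (r : ℕ) (s : ℕ → Fin m → R) (τ : R) :
    expand R m (differenceSymbol r s τ) =
      (C.mapMatrix (scalar (Fin m) τ) - ∑ i ∈ Finset.range (r + 1),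
        (X : R[X]) ^ i • C.mapMatrix (diagonal (s i) * cyclicShift m 1 ^ i)).det := by
  calc expand R m (differenceSymbol r s τ)
    _ = (differenceMatrix r (fun i a ↦ C (s i a)) (C τ) (X ^ m)).det := by
      rw [differenceSymbol, AlgHom.map_det]
      refine congrArg Matrix.det ((differenceMatrix_map (expand R m).toRingHom ..).trans ?_)
      simp
    _ = _ := by
      rw [det_differenceMatrix_pow _ _ _ monic_X.mem_nonZeroDivisors]
      have map_scalar : C.mapMatrix (scalar (Fin m) τ) = scalar (Fin m) (C τ) :=
        Matrix.diagonal_map C_0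
      simp only [map_scalar, mapMatrix_diagonal_mul_cyclicShift_pow, C_1, _root_.smul_pow,
        _root_.mul_smul_comm]

lemma natDegree_det_le {n : Type*} [Fintype n] [DecidableEq n] {d : ℕ} {M : Matrix n n R[X]}
    (hM : ∀ i j, (M i j).natDegree ≤ d) : M.det.natDegree ≤ Fintype.card n * d := by
  rw [Matrix.det_apply]
  refine natDegree_sum_le_of_forall_le _ _ fun σ _ ↦ (natDegree_smul_le _ _).trans ?_
  calc (∏ i, M (σ i) i).natDegree
    _ ≤ ∑ i, (M (σ i) i).natDegree := natDegree_prod_le _ _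
    _ ≤ Fintype.card n * d := Finset.sum_le_card_nsmul _ _ d fun i _ ↦ hM _ _

lemma coeff_det_card_mul {n : Type*} [Fintype n] [DecidableEq n] {d : ℕ} {M : Matrix n n R[X]}
    (hM : ∀ i j, (M i j).natDegree ≤ d) :
    M.det.coeff (Fintype.card n * d) = (M.map fun P ↦ P.coeff d).det := by
  rw [Matrix.det_apply, Matrix.det_apply, finsetSum_coeff]
  refine Finset.sum_congr rfl fun σ _ ↦ ?_
  rw [coeff_smul, ← Finset.card_univ, coeff_prod_of_natDegree_le _ _ _ fun i _ ↦ hM _ _]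
  rfl

lemma natDegree_differenceSymbol_le_and_coeff {r : ℕ} (hr : r ≠ 0) (hm : 0 < m)
    (s : ℕ → Fin m → R) (τ : R) :
    (differenceSymbol r s τ).natDegree ≤ r ∧ (differenceSymbol r s τ).coeff r =
      (-1) ^ m * ((∏ a, s r a) * (cyclicShift m (1 : R)).det ^ r) := by
  -- Substituting `X ^ m` for `X` bounds the degree of every entry by `r`, hence that of the
  -- determinant by `m * r`.
  let M : Matrix (Fin m) (Fin m) R[X] :=
    C.mapMatrix (scalar (Fin m) τ) - ∑ i ∈ Finset.range (r + 1),
        (X : R[X]) ^ i • C.mapMatrix (diagonal (s i) * cyclicShift m 1 ^ i)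
  have expand_symbol : expand R m (differenceSymbol r s τ) = M.det := expand_differenceSymbol r s τ
  have entry_natDegree (a b : Fin m) : (M a b).natDegree ≤ r := by
    simp only [M, Matrix.sub_apply, Matrix.sum_apply, Matrix.smul_apply, RingHom.mapMatrix_apply,
      Matrix.map_apply, smul_eq_mul]
    refine (natDegree_sub_le _ _).trans (max_le ((natDegree_C _).trans_le r.zero_le)
      (natDegree_sum_le_of_forall_le _ _ fun i hi ↦ ?_))
    rw [mul_comm]
    exact (natDegree_C_mul_X_pow_le _ _).trans (Finset.mem_range_succ_iff.1 hi)
  have entry_coeff : M.map (fun P ↦ P.coeff r) = -(diagonal (s r) * cyclicShift m 1 ^ r) := by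
    ext a b
    simp only [M, Matrix.map_apply, Matrix.sub_apply, Matrix.sum_apply, Matrix.smul_apply,
      RingHom.mapMatrix_apply, smul_eq_mul, coeff_sub, coeff_C_of_ne_zero hr, finsetSum_coeff,
      coeff_mul_C, coeff_X_pow]
    simp
  have natDegree_le := natDegree_det_le entry_natDegree
  rw [← expand_symbol, natDegree_expand, Fintype.card_fin, mul_comm] at natDegree_le
  have coeff_eq := coeff_det_card_mul entry_natDegree
  rw [← expand_symbol, Fintype.card_fin, mul_comm, coeff_expand_mul hm, entry_coeff, Matrix.det_neg,
    Matrix.det_mul, Matrix.det_diagonal, Matrix.det_pow, Fintype.card_fin] at coeff_eq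
  exact ⟨Nat.le_of_mul_le_mul_left natDegree_le hm, coeff_eq⟩

lemma natDegree_eq_and_isUnit_leadingCoeff_differenceSymbol [Nontrivial R] {r : ℕ} (hr : r ≠ 0)
    (hm : 0 < m) {s : ℕ → Fin m → R} (hs : ∀ a, IsUnit (s r a)) (τ : R) :
    (differenceSymbol r s τ).natDegree = r ∧ IsUnit (differenceSymbol r s τ).leadingCoeff := by
  obtain ⟨natDegree_le, coeff_eq⟩ := natDegree_differenceSymbol_le_and_coeff hr hm s τ
  have coeff_unit : IsUnit ((differenceSymbol r s τ).coeff r) := by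
    rw [coeff_eq]
    exact (isUnit_neg_one.pow m).mul
      ((IsUnit.prod_univ_iff.2 hs).mul ((isUnit_det_cyclicShift_one hm).pow r))
  have natDegree_eq := natDegree_eq_of_le_of_coeff_ne_zero natDegree_le coeff_unit.ne_zero
  exact ⟨natDegree_eq, by rwa [leadingCoeff, natDegree_eq]⟩

end DifferenceMatrix

section FiniteField

lemma charpoly_map_eq_of_mulVec {F K 𝒦 n : Type*} [Field F] [Field K] [Algebra F K]
    [FiniteDimensional F K] [Field 𝒦] [Algebra F 𝒦] [Fintype n] [DecidableEq n]
    {e : n → K →ₐ[F] 𝒦} (he : Function.Injective e)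
    (hn : Module.finrank F K = Fintype.card n) {L : K →ₗ[F] K} {N : Matrix n n 𝒦}
    (hN : ∀ x, N.mulVec (fun j ↦ e j x) = fun j ↦ e j (L x)) :
    L.charpoly.map (algebraMap F 𝒦) = N.charpoly := by
  let b : Module.Basis n F K :=
    (Module.finBasisOfFinrankEq F K hn).reindex (Fintype.equivFin n).symm
  let P : Matrix n n 𝒦 := Matrix.of fun j i ↦ e j (b i)
  have P_unit : IsUnit P := by
    rw [← Matrix.linearIndependent_rows_iff_isUnit]
    exact ((linearIndependent_toLinearMap F K 𝒦).comp e he).map' (b.constr 𝒦).symm.toLinearMap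
      (LinearEquiv.ker _)
  have intertwine : N * P = P * (LinearMap.toMatrix b b L).map (algebraMap F 𝒦) := by
    ext j i
    calc (N * P) j i
      _ = e j (L (b i)) := congrFun (hN (b i)) j
      _ = e j (∑ k, LinearMap.toMatrix b b L k i • b k) := by
        simp only [LinearMap.toMatrix_apply, b.sum_repr]
      _ = (P * (LinearMap.toMatrix b b L).map (algebraMap F 𝒦)) j i := by
        simp [Matrix.mul_apply, P, Algebra.smul_def, mul_comm]
  obtain ⟨U, hU⟩ := P_unit
  have conj : N = U * (LinearMap.toMatrix b b L).map (algebraMap F 𝒦) * (U : Matrix n n 𝒦)⁻¹ := by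
    rw [← Matrix.coe_units_inv, Units.eq_mul_inv_iff_mul_eq, hU, intertwine]
  rw [conj, Matrix.charpoly_units_conj, Matrix.charpoly_map, LinearMap.charpoly_toMatrix]

variable {F E K : Type*} [Field F] [Fintype F] [Field E] [Algebra F E] [Field K]
  [Algebra F K] [Algebra E K] [IsScalarTower F E K]

lemma frobeniusAlgHom_pow_apply (j : ℕ) (x : K) :
    (FiniteField.frobeniusAlgHom F K ^ j) x = x ^ Fintype.card F ^ j := by
  rw [AlgHom.coe_pow, FiniteField.coe_frobeniusAlgHom, pow_iterate]

lemma frobeniusAlgHom_pow_finrank [Finite K] :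
    FiniteField.frobeniusAlgHom F K ^ Module.finrank F K = 1 := by
  have : Fintype K := Fintype.ofFinite K
  ext x
  rw [frobeniusAlgHom_pow_apply, ← Module.card_eq_pow_finrank, FiniteField.pow_card,
    AlgHom.one_apply]

lemma charpoly_map_eq_det_differenceMatrix [Finite K] {N : ℕ} (hN : Module.finrank F K = N)
    {L : K →ₗ[F] K} {r : ℕ} {t : ℕ → E}
    (hL : ∀ x, L x = ∑ i ∈ Finset.range (r + 1), algebraMap E K (t i) * x ^ Fintype.card F ^ i) :
    L.charpoly.map (algebraMap F E) =
      (differenceMatrix (m := N) r (fun i j ↦ C (t i ^ Fintype.card F ^ (j : ℕ))) X 1).det := by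
  let φ := FiniteField.frobeniusAlgHom F K
  have φ_apply (j : ℕ) (x : K) : (φ ^ j) x = x ^ Fintype.card F ^ j := frobeniusAlgHom_pow_apply j x
  have φ_periodic (x : K) (j : ℕ) : (φ ^ (j + N)) x = 1 * (φ ^ j) x := by
    rw [pow_add, ← hN, frobeniusAlgHom_pow_finrank, mul_one, one_mul]
  have φ_injective : Function.Injective fun j : Fin N ↦ φ ^ (j : ℕ) := by
    subst hN
    exact (FiniteField.bijective_frobeniusAlgHom_pow F K).1
  let M : Matrix (Fin N) (Fin N) E := ∑ i ∈ Finset.range (r + 1),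
    diagonal (fun j : Fin N ↦ t i ^ Fintype.card F ^ (j : ℕ)) * cyclicShift N 1 ^ i
  have M_mulVec (x : K) : (M.map (algebraMap E K)).mulVec (fun j : Fin N ↦ (φ ^ (j : ℕ)) x) =
      fun j : Fin N ↦ (φ ^ (j : ℕ)) (L x) := by
    have shift_mulVec (i : ℕ) := cyclicShift_pow_mulVec (u := fun j ↦ (φ ^ j) x) (φ_periodic x) i
    ext j
    rw [← RingHom.mapMatrix_apply, map_sum, Matrix.sum_mulVec, Finset.sum_apply, hL, map_sum]
    refine Finset.sum_congr rfl fun i _ ↦ ?_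
    rw [mapMatrix_diagonal_mul_cyclicShift_pow, map_one, ← Matrix.mulVec_mulVec, shift_mulVec,
      Matrix.mulVec_diagonal, map_mul, φ_apply, φ_apply, φ_apply, map_pow, ← pow_mul, ← pow_add,
      add_comm i]
  have charpoly_eq : L.charpoly.map (algebraMap F K) = (M.map (algebraMap E K)).charpoly :=
    charpoly_map_eq_of_mulVec φ_injective (by simpa) M_mulVec
  rw [← C_1, ← charpoly_sum_diagonal_mul_cyclicShift_pow]
  apply Polynomial.map_injective _ (algebraMap E K).injective
  rw [Polynomial.map_map, ← IsScalarTower.algebraMap_eq, charpoly_eq, Matrix.charpoly_map]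

lemma charpoly_map_eq_det_aeval_cyclicShift [Finite K] {m ℓ : ℕ}
    (hm : Module.finrank F E = m) (hK : Module.finrank F K = ℓ * m) {L : K →ₗ[F] K} {r : ℕ}
    {t : ℕ → E}
    (hL : ∀ x, L x = ∑ i ∈ Finset.range (r + 1), algebraMap E K (t i) * x ^ Fintype.card F ^ i) :
    L.charpoly.map (algebraMap F E) =
      (aeval (cyclicShift ℓ 1)
        (differenceSymbol r (fun i (a : Fin m) ↦ C (t i ^ Fintype.card F ^ (a : ℕ))) X)).det := by
  have : Finite E := Finite.of_injective _ (algebraMap E K).injective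
  have pow_mod (y : E) (j : ℕ) : y ^ Fintype.card F ^ j = y ^ Fintype.card F ^ (j % m) := by
    rw [← frobeniusAlgHom_pow_apply, ← frobeniusAlgHom_pow_apply, ← hm,
      ← pow_eq_pow_mod j frobeniusAlgHom_pow_finrank]
  rw [charpoly_map_eq_det_differenceMatrix hK hL, ← det_differenceMatrix_modNat]
  congr 2
  ext i j : 2
  rw [pow_mod, Fin.coe_modNat]

end FiniteField

section Recurrence

variable {A : Type*} [CommRing A] [IsDomain A] [IsPrincipalIdealRing A]

lemma exists_isSolution_of_algebraMap_eq_pow_mul_prod {𝒦 : Type*} [CommRing 𝒦] [IsDomain 𝒦]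
    [Algebra A 𝒦] [FaithfulSMul A 𝒦] {g : 𝒦} (hg : IsIntegral A g) {s : Multiset 𝒦}
    (hs : ∀ b ∈ s, IsIntegral A b) {u : ℕ → A}
    (hu : ∀ n, algebraMap A 𝒦 (u n) = g ^ (n + 1) * (s.map fun b ↦ b ^ (n + 1) - 1).prod) :
    ∃ c : Fin (2 ^ s.card) → A, LinearRecurrence.IsSolution ⟨2 ^ s.card, c⟩ u := by
  let S := integralClosure A 𝒦
  have : FaithfulSMul A S := FaithfulSMul.tower_bot A S 𝒦
  lift g to S using hg
  lift s to Multiset S using hs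
  obtain ⟨c, hc⟩ := exists_isSolution_pow_mul_prod_pow_sub_one g s
  have u_lift : (fun n ↦ algebraMap A S (u n)) =
      fun n ↦ g ^ (n + 1) * (s.map fun b ↦ b ^ (n + 1) - 1).prod := by
    ext n
    refine (hu n).trans ?_
    simp [Multiset.map_map]
  rw [Multiset.card_map]
  exact exists_isSolution_of_algebraMap _ (u_lift ▸ hc)

lemma isIntegral_of_aeval_eq_zero_of_isUnit_leadingCoeff {R S : Type*} [CommRing R] [CommRing S]
    [Algebra R S] {G : R[X]} (hG : IsUnit G.leadingCoeff) {b : S} (hb : aeval b G = 0) :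
    IsIntegral R b := by
  obtain ⟨a, ha⟩ := hG
  have smul_integral := (isIntegral_leadingCoeff_smul G b hb).smul (↑a⁻¹ : R)
  rwa [← ha, smul_smul, Units.inv_mul, one_smul] at smul_integral

lemma exists_recurrence_of_algebraMap_eq_det_aeval_cyclicShift {R : Type*} [CommRing R] [IsDomain R]
    [Algebra A R] [Algebra.IsIntegral A R] [FaithfulSMul A R] {G : R[X]}
    (hG : IsUnit G.leadingCoeff) {u : ℕ → A}
    (hu : ∀ n, 0 < n → algebraMap A R (u n) = (aeval (cyclicShift n 1) G).det) :
    ∃ c : Fin (2 ^ G.natDegree) → A, ∀ n, 1 ≤ n →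
      u (n + 2 ^ G.natDegree) = ∑ i, c i * u (n + i) := by
  let 𝒦 := AlgebraicClosure (FractionRing R)
  have : FaithfulSMul R 𝒦 := FaithfulSMul.trans R (FractionRing R) 𝒦
  have : FaithfulSMul A 𝒦 := FaithfulSMul.trans A R 𝒦
  let H : 𝒦[X] := G.map (algebraMap R 𝒦)
  have H_splits : H.Splits := IsAlgClosed.splits H
  have card_roots : H.roots.card = G.natDegree := by
    rw [← H_splits.natDegree_eq_card_roots]
    exact natDegree_map_eq_of_injective (FaithfulSMul.algebraMap_injective R 𝒦) G
  have leadingCoeff_integral : IsIntegral A (H.leadingCoeff * (-1) ^ H.roots.card) := by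
    rw [leadingCoeff_map_of_injective (FaithfulSMul.algebraMap_injective R 𝒦)]
    exact ((Algebra.IsIntegral.isIntegral G.leadingCoeff).algebraMap).mul (isIntegral_one.neg.pow _)
  have roots_integral : ∀ b ∈ H.roots, IsIntegral A b := fun b hb ↦
    isIntegral_trans b (isIntegral_of_aeval_eq_zero_of_isUnit_leadingCoeff hG
      (by simpa [H] using isRoot_of_mem_roots hb))
  have u_eq (n : ℕ) : algebraMap A 𝒦 (u (n + 1)) =
      (H.leadingCoeff * (-1) ^ H.roots.card) ^ (n + 1) *
        (H.roots.map fun b ↦ b ^ (n + 1) - 1).prod := by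
    rw [← det_aeval_cyclicShift_one H_splits n.succ_pos, IsScalarTower.algebraMap_apply A R 𝒦,
      hu _ n.succ_pos, RingHom.map_det, map_aeval_eq_aeval_map (φ := algebraMap R 𝒦),
      RingHom.mapMatrix_apply, cyclicShift_map, map_one]
    ext a : 1
    exact (Matrix.diagonal_map (map_zero (algebraMap R 𝒦))).symm
  obtain ⟨c, hc⟩ :=
    exists_isSolution_of_algebraMap_eq_pow_mul_prod leadingCoeff_integral roots_integral u_eq
  rw [← card_roots]
  refine ⟨c, fun n hn ↦ ?_⟩
  obtain ⟨n, rfl⟩ := Nat.exists_eq_add_of_le' hn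
  simpa [add_right_comm] using hc n

end Recurrence

/-- let `C_L^{(ℓ)} ∈ 𝔽_q[T]` be the characteristic polynomial of the
`𝔽_q`-linear map induced on `𝔽_{q^{mℓ}}` by a `q`-linearized polynomial `L` of `q`-degree
`r` with coefficients in `𝔽_{q^m}` (leading coefficient nonzero). Then `{C_L^{(ℓ)}}_{ℓ≥1}`
is a linear recurrence sequence over `𝔽_q[T]` of order at most `2^r`. -/
theorem charpoly_sequence_linear_recurrence
    (p ν : ℕ) [Fact p.Prime] (hν : 0 < ν)
    (F : Type*) [Field F] [Fintype F] [CharP F p] (hq : Fintype.card F = p ^ ν)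
    (E : Type*) [Field E] [Fintype E] [Algebra F E]
    (m : ℕ) (hm : Module.finrank F E = m)
    (r : ℕ) (hr : 1 ≤ r) (t : ℕ → E) (htr : t r ≠ 0)
    (k : ℕ → Type*) [∀ ℓ, Field (k ℓ)] [∀ ℓ, Fintype (k ℓ)] [∀ ℓ, CharP (k ℓ) p]
    [∀ ℓ, Algebra F (k ℓ)] [∀ ℓ, Algebra E (k ℓ)] [∀ ℓ, IsScalarTower F E (k ℓ)]
    [∀ ℓ, Module.Finite F (k ℓ)]
    (hcard : ∀ ℓ, 1 ≤ ℓ → Fintype.card (k ℓ) = p ^ (ν * m * ℓ))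
    (Cseq : ℕ → Polynomial F)
    (hC : ∀ ℓ, Cseq ℓ = LinearMap.charpoly
      (qLinearMap F p ν hq (k ℓ) r (fun i => algebraMap E (k ℓ) (t i)))) :
    ∃ d ≤ 2 ^ r, ∃ c : Fin d → Polynomial F,
      ∀ ℓ, 1 ≤ ℓ → Cseq (ℓ + d) = ∑ i : Fin d, c i * Cseq (ℓ + i.val) := by
  have m_pos : 0 < m := hm ▸ Module.finrank_pos
  have finrank_k (ℓ : ℕ) (hℓ : 0 < ℓ) : Module.finrank F (k ℓ) = ℓ * m := by
    have card_eq := Module.card_eq_pow_finrank (K := F) (V := k ℓ)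
    rw [hcard ℓ hℓ, hq, mul_assoc, pow_mul] at card_eq
    have one_lt_q : 1 < p ^ ν := one_lt_pow₀ (Fact.out : p.Prime).one_lt hν.ne'
    exact (Nat.pow_right_injective one_lt_q card_eq).symm.trans (mul_comm m ℓ)
  let G := differenceSymbol r (fun i (a : Fin m) ↦ C (t i ^ Fintype.card F ^ (a : ℕ))) (X : E[X])
  obtain ⟨natDegree_G, leadingCoeff_G⟩ : G.natDegree = r ∧ IsUnit G.leadingCoeff :=
    natDegree_eq_and_isUnit_leadingCoeff_differenceSymbol (Nat.one_le_iff_ne_zero.1 hr) m_pos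
      (fun a ↦ isUnit_C.2 (htr.isUnit.pow _)) X
  have Cseq_map (ℓ : ℕ) (hℓ : 0 < ℓ) :
      (Cseq ℓ).map (algebraMap F E) = (aeval (cyclicShift ℓ 1) G).det := by
    rw [hC]
    exact charpoly_map_eq_det_aeval_cyclicShift hm (finrank_k ℓ hℓ) fun _ ↦ rfl
  let := Polynomial.algebra F E
  have : FaithfulSMul F[X] E[X] :=
    (faithfulSMul_iff_algebraMap_injective _ _).2 (map_injective _ (algebraMap F E).injective)
  refine ⟨2 ^ r, le_rfl, ?_⟩
  rw [← natDegree_G]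
  exact exists_recurrence_of_algebraMap_eq_det_aeval_cyclicShift leadingCoeff_G Cseq_map
end
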